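/- The generalised ant with rule word LLRLRL has infinitely many highways: the set of integers N for which LLRLRL admits a highway of period N and drift (−2,−2) is infinite (it contains 220+24n for every n ∈ ℕ), and for a fixed drift (−2,−2) a single highway configuration can be a highway of at most one period N (since T_{LLRLRL} has no periodic points), so these highways are pairwise distinct. -/

import Mathlib

/-- Cells of the grid `ℤ²`. -/
abbrev Cell : Type := ℤ × ℤ

/-- The four unit directions of `ℤ²` (the state set `Q`). -/
inductive Dir : Type
  | E | N | W | S
deriving DecidableEq

/-- Rotation by 90° counterclockwise. -/
def Dir.left : Dir → Dir
  | .E => .N | .N => .W | .W => .S | .S => .E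

/-- Rotation by 90° clockwise. -/
def Dir.right : Dir → Dir
  | .E => .S | .S => .W | .W => .N | .N => .E

/-- The unit vector of a direction. -/
def Dir.vec : Dir → Cell
  | .E => (1, 0) | .N => (0, 1) | .W => (-1, 0) | .S => (0, -1)

/-- Configurations: a picture `ℤ² → ℤ/nℤ`, a position and a direction. -/
abbrev Config (n : ℕ) : Type := (Cell → ZMod n) × Cell × Dir

/-- One step of the generalised ant whose rule word over the alphabet `ℤ/nℤ` is
described by `isL : ZMod n → Bool` (`isL a = true` iff the ant turns left on symbol
`a`): the symbol under the ant is increased by `1 (mod n)`, the ant turns left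
(counterclockwise) or right (clockwise), and moves one step in its new direction. -/
def antStep (n : ℕ) (isL : ZMod n → Bool) (cfg : Config n) : Config n :=
  let C := cfg.1
  let p := cfg.2.1
  let d' := if isL (C p) then cfg.2.2.left else cfg.2.2.right
  (Function.update C p (C p + 1), p + d'.vec, d')


/-- `IsHighway n isL N drift S P p d` : the pattern `P` (supported on the finite set
`S`, extended by `0` outside `S`), together with the position `p ∈ S` and the
direction `d`, is a highway of period `N` and drift `drift` for the generalised ant
with rule `isL` over the alphabet `ℤ/nℤ`: the ant stays in `S` during the first `N`
steps, after `N` steps it is at `p + drift` in direction `d`, and the pattern is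
reproduced shifted by `drift` (cells of `S` whose shift leaves `S` must carry `0`). -/
def IsHighway (n : ℕ) (isL : ZMod n → Bool) (N : ℕ) (drift : Cell)
    (S : Set Cell) (P : Cell → ZMod n) (p : Cell) (d : Dir) : Prop :=
  S.Finite ∧ p ∈ S ∧ (∀ q : Cell, q ∉ S → P q = 0) ∧
  (∀ t : ℕ, t < N → ((antStep n isL)^[t] (P, p, d)).2.1 ∈ S) ∧
  ((antStep n isL)^[N] (P, p, d)).2.1 = p + drift ∧
  ((antStep n isL)^[N] (P, p, d)).2.2 = d ∧
  (∀ q : Cell, q ∈ S →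
    (q + drift ∈ S → ((antStep n isL)^[N] (P, p, d)).1 (q + drift) = P q) ∧
    (q + drift ∉ S → P q = 0))

/-- The rule word `LLRLRL`: the ant turns left on symbols `0, 1, 3, 5` and right on
symbols `2, 4` (alphabet `ℤ/6ℤ`). -/
def isLLRLRL : ZMod 6 → Bool :=
  fun a => decide (a.val = 0 ∨ a.val = 1 ∨ a.val = 3 ∨ a.val = 5)

/-!
A symbol records the number of visits to its cell, so two different periods of one highway
configuration would yield a periodic orbit. In a periodic orbit, the cell maximising `x + y` is
visited infinitely often, hence with an L symbol and with an R symbol. The ant enters and leaves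
this cell through its west and south sides only, so it enters vertically at an L symbol and
horizontally at an R symbol; but the axis of motion is determined by the parity of the cell.

The highways consist of a core, a horizontal wake of `n` equal tiles and a tip. In one period the
ant makes two excursions from the core along the wake to the tip and back. It crosses each tile in
`12 + 4 + 4 + 4 = 24` steps, which in total move the tile down by `2`. As long as the ant is inside
a tile the rest of the picture is irrelevant, so finitely many finite runs settle all `n`.
-/

section

variable {n : ℕ} {isL : ZMod n → Bool}

theorem antStep_fst_apply (X : Config n) (q : Cell) :
    (antStep n isL X).1 q = X.1 q + if X.2.1 = q then 1 else 0 := by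
  by_cases h : X.2.1 = q
  · subst h
    simp [antStep]
  · simp [antStep, h, Function.update_of_ne (Ne.symm h)]

theorem iterate_antStep_fst_apply (X : Config n) (q : Cell) (t : ℕ) :
    ((antStep n isL)^[t] X).1 q =
      X.1 q + (Nat.count (fun s ↦ ((antStep n isL)^[s] X).2.1 = q) t : ℕ) := by
  induction t with
  | zero => simp
  | succ t ih =>
    rw [Function.iterate_succ_apply', antStep_fst_apply, ih, Nat.count_succ]
    split_ifs <;> push_cast <;> ring

theorem iterate_antStep_fst_apply_of_not_visited {X : Config n} {q : Cell} {t : ℕ}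
    (h : ∀ s < t, ((antStep n isL)^[s] X).2.1 ≠ q) : ((antStep n isL)^[t] X).1 q = X.1 q := by
  rw [iterate_antStep_fst_apply, Nat.count_iff_forall_not.2 fun s hs ↦ h s hs]
  simp

theorem exists_visit_with_symbol [NeZero n] {X : Config n} {q : Cell}
    (hq : {t | ((antStep n isL)^[t] X).2.1 = q}.Infinite) (a : ZMod n) :
    ∃ t, ((antStep n isL)^[t] X).2.1 = q ∧ ((antStep n isL)^[t] X).1 q = a := by
  refine ⟨Nat.nth (fun t ↦ ((antStep n isL)^[t] X).2.1 = q) (a - X.1 q).val,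
    Nat.nth_mem_of_infinite hq _, ?_⟩
  rw [iterate_antStep_fst_apply, Nat.count_nth_of_infinite hq, ZMod.natCast_zmod_val,
    add_sub_cancel]

/-- `X` and `Y` have the same ant and the same symbols on `S`, up to translation by `v`: this is
how a highway configuration is related to its image after one period. -/
def IsTranslateOn (S : Set Cell) (v : Cell) (X Y : Config n) : Prop :=
  Y.2.1 = X.2.1 + v ∧ Y.2.2 = X.2.2 ∧ ∀ q ∈ S, Y.1 (q + v) = X.1 q

namespace IsTranslateOn

variable {S : Set Cell} {v : Cell} {X Y Z : Config n}

theorem map_antStep (h : IsTranslateOn S v X Y) (hX : X.2.1 ∈ S) :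
    IsTranslateOn S v (antStep n isL X) (antStep n isL Y) := by
  obtain ⟨hpos, hdir, hsymb⟩ := h
  have hread : Y.1 (X.2.1 + v) = X.1 X.2.1 := hsymb _ hX
  refine ⟨?_, ?_, fun q hq ↦ ?_⟩
  · simp only [antStep, hpos, hdir, hread, add_right_comm]
  · simp only [antStep, hpos, hdir, hread]
  · simp only [antStep_fst_apply, hsymb q hq, hpos, add_left_inj]

theorem map_iterate {t : ℕ} (h : IsTranslateOn S v X Y)
    (hX : ∀ s < t, ((antStep n isL)^[s] X).2.1 ∈ S) :
    IsTranslateOn S v ((antStep n isL)^[t] X) ((antStep n isL)^[t] Y) := by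
  induction t with
  | zero => exact h
  | succ t ih =>
    simp only [Function.iterate_succ_apply']
    exact (ih fun s hs ↦ hX s (by omega)).map_antStep (hX t (by omega))

theorem eq_of_forall_notMem (hY : IsTranslateOn S v X Y) (hZ : IsTranslateOn S v X Z)
    (h : ∀ q, q - v ∉ S → Y.1 q = Z.1 q) : Y = Z := by
  refine Prod.ext (funext fun q ↦ ?_) (Prod.ext (hY.1.trans hZ.1.symm) (hY.2.1.trans hZ.2.1.symm))
  by_cases hq : q - v ∈ S
  · simpa using (hY.2.2 _ hq).trans (hZ.2.2 _ hq).symm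
  · exact h q hq

end IsTranslateOn

namespace IsHighway

variable {N N₁ N₂ : ℕ} {v : Cell} {S : Set Cell} {P : Cell → ZMod n} {p : Cell} {d : Dir}

theorem isTranslateOn (h : IsHighway n isL N v S P p d) :
    IsTranslateOn S v (P, p, d) ((antStep n isL)^[N] (P, p, d)) := by
  obtain ⟨-, -, hzero, hstay, hpos, hdir, hsymb⟩ := h
  refine ⟨hpos, hdir, fun q hq ↦ ?_⟩
  by_cases hqv : q + v ∈ S
  · exact (hsymb q hq).1 hqv
  · calc ((antStep n isL)^[N] (P, p, d)).1 (q + v)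
        = P (q + v) := iterate_antStep_fst_apply_of_not_visited
          fun s hs heq ↦ hqv (heq ▸ hstay s hs)
      _ = P q := by rw [hzero _ hqv, (hsymb q hq).2 hqv]

theorem isPeriodicPt_of_lt (h₁ : IsHighway n isL N₁ v S P p d) (h₂ : IsHighway n isL N₂ v S P p d)
    (hlt : N₁ < N₂) :
    Function.IsPeriodicPt (antStep n isL) (N₂ - N₁) ((antStep n isL)^[N₁] (P, p, d)) := by
  have hsub : (antStep n isL)^[N₂ - N₁] ((antStep n isL)^[N₁] (P, p, d)) =
      (antStep n isL)^[N₂] (P, p, d) := by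
    rw [← Function.iterate_add_apply, Nat.sub_add_cancel hlt.le]
  have ⟨_, _, _, hstay, _⟩ := h₂
  rw [Function.IsPeriodicPt, Function.IsFixedPt]
  refine IsTranslateOn.eq_of_forall_notMem (hsub ▸ h₂.isTranslateOn) h₁.isTranslateOn fun q hq ↦
    iterate_antStep_fst_apply_of_not_visited fun s hs hvisit ↦ hq ?_
  have htranslate := h₁.isTranslateOn.map_iterate (isL := isL) (t := s)
    fun r hr ↦ hstay r (by omega)
  rw [← hvisit, htranslate.1, add_sub_cancel_right]
  exact hstay s (by omega)

end IsHighway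

/-- The axis of a direction: `1` if it is horizontal, `0` if it is vertical. -/
def Dir.axis : Dir → ZMod 2
  | .E | .W => 1
  | .N | .S => 0

/-- The invariant `x + y + axis d` mod `2`: a turn changes the axis and a move changes `x + y`. -/
def Config.parity (X : Config n) : ZMod 2 := X.2.1.1 + X.2.1.2 + X.2.2.axis

theorem parity_antStep (X : Config n) : Config.parity (antStep n isL X) = Config.parity X := by
  have hturn : ∀ d d' : Dir, d' = d.left ∨ d' = d.right →
      (d'.vec.1 + d'.vec.2 + d'.axis : ZMod 2) = d.axis := by
    rintro (_ | _ | _ | _) _ (rfl | rfl) <;> decide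
  have hdir : (antStep n isL X).2.2 = X.2.2.left ∨ (antStep n isL X).2.2 = X.2.2.right :=
    ite_eq_or_eq _ _ _
  have hpos : (antStep n isL X).2.1 = X.2.1 + (antStep n isL X).2.2.vec := rfl
  simp only [Config.parity, hpos, Prod.fst_add, Prod.snd_add, Int.cast_add]
  linear_combination hturn _ _ hdir

theorem parity_iterate_antStep (X : Config n) (t : ℕ) :
    Config.parity ((antStep n isL)^[t] X) = Config.parity X := by
  induction t with
  | zero => rfl
  | succ t ih => rw [Function.iterate_succ_apply', parity_antStep, ih]

theorem isL_eq_true_iff_of_corner {X : Config n} {q : Cell} (hq : (antStep n isL X).2.1 = q)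
    (hfrom : ∀ e ∈ [Dir.E, Dir.N], X.2.1 ≠ q + e.vec)
    (hto : ∀ e ∈ [Dir.E, Dir.N], ((antStep n isL)^[2] X).2.1 ≠ q + e.vec) :
    isL ((antStep n isL X).1 q) = true ↔ (antStep n isL X).2.2.axis = 0 := by
  have hX : X.2.1 = q + -(antStep n isL X).2.2.vec := by simp [← hq, antStep]
  have hXX : ((antStep n isL)^[2] X).2.1 = q +
      (if isL ((antStep n isL X).1 q) then (antStep n isL X).2.2.left
        else (antStep n isL X).2.2.right).vec := by
    rw [← hq]; rfl
  simp only [hX, ne_eq, add_right_inj] at hfrom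
  simp only [hXX, ne_eq, add_right_inj] at hto
  revert hfrom hto
  generalize (antStep n isL X).2.2 = d, isL ((antStep n isL X).1 q) = b
  cases d <;> cases b <;> decide

theorem exists_corner_of_isPeriodicPt {X : Config n} {m : ℕ} (hm : 0 < m)
    (hX : Function.IsPeriodicPt (antStep n isL) m X) :
    ∃ q, (∃ t, ((antStep n isL)^[t] X).2.1 = q) ∧
      ∀ s, ∀ e ∈ [Dir.E, Dir.N], ((antStep n isL)^[s] X).2.1 ≠ q + e.vec := by
  obtain ⟨t, -, ht⟩ := Finset.exists_max_image (Finset.range m)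
    (fun t ↦ ((antStep n isL)^[t] X).2.1.1 + ((antStep n isL)^[t] X).2.1.2)
    ⟨0, Finset.mem_range.2 hm⟩
  refine ⟨_, ⟨t, rfl⟩, fun s e he heq ↦ ?_⟩
  have hle := ht (s % m) (Finset.mem_range.2 (Nat.mod_lt s hm))
  rw [hX.iterate_mod_apply, heq] at hle
  simp only [List.mem_cons, List.not_mem_nil, or_false] at he
  rcases he with rfl | rfl <;> simp [Dir.vec] at hle

theorem infinite_visits_of_isPeriodicPt {X : Config n} {m t : ℕ} (hm : 0 < m)
    (hX : Function.IsPeriodicPt (antStep n isL) m X) :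
    {s | ((antStep n isL)^[s] X).2.1 = ((antStep n isL)^[t] X).2.1}.Infinite := by
  refine Set.infinite_of_injective_forall_mem (f := fun k ↦ t + m * k) (fun k l hkl ↦ ?_)
    fun k ↦ ?_
  · exact Nat.eq_of_mul_eq_mul_left hm (Nat.add_left_cancel hkl)
  · have hreturn : (antStep n isL)^[m * k] X = X := (hX.mul_const k).eq
    simp only [Set.mem_ofPred_eq, Function.iterate_add_apply, hreturn]

theorem periodicPts_antStep_eq_empty [NeZero n] (hL : ∃ a, isL a = true) (hR : ∃ a, isL a = false) :
    Function.periodicPts (antStep n isL) = ∅ := by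
  refine Set.eq_empty_of_forall_notMem fun X ⟨m, hm, hX⟩ ↦ ?_
  obtain ⟨q, ⟨t₀, ht₀⟩, hcorner⟩ := exists_corner_of_isPeriodicPt hm hX
  have hinf := ht₀ ▸ infinite_visits_of_isPeriodicPt (t := t₀) hm hX
  have haxis : ∀ t, ((antStep n isL)^[t] X).2.1 = q →
      (isL (((antStep n isL)^[t] X).1 q) = true ↔ ((antStep n isL)^[t] X).2.2.axis = 0) := by
    intro t ht
    have hpred : antStep n isL ((antStep n isL)^[t + (m - 1)] X) = (antStep n isL)^[t] X := by
      rw [← Function.iterate_succ_apply' (antStep n isL),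
        show (t + (m - 1)).succ = t + m by omega, Function.iterate_add_apply, hX.eq]
    rw [← hpred] at ht ⊢
    refine isL_eq_true_iff_of_corner ht (hcorner _) ?_
    rw [← Function.iterate_add_apply]
    exact hcorner _
  have hparity : ∀ t, ((antStep n isL)^[t] X).2.1 = q →
      ((antStep n isL)^[t] X).2.2.axis = Config.parity X - (q.1 + q.2) := by
    intro t ht
    rw [← parity_iterate_antStep (isL := isL) X t, Config.parity, ht, add_sub_cancel_left]
  obtain ⟨a, ha⟩ := hL
  obtain ⟨b, hb⟩ := hR
  obtain ⟨s, hs, rfl⟩ := exists_visit_with_symbol hinf a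
  obtain ⟨t, ht, rfl⟩ := exists_visit_with_symbol hinf b
  have hzero := (haxis s hs).1 ha
  rw [hparity s hs, ← hparity t ht, ← haxis t ht, hb] at hzero
  exact Bool.false_ne_true hzero

theorem IsHighway.period_unique [NeZero n] (hL : ∃ a, isL a = true) (hR : ∃ a, isL a = false)
    {N₁ N₂ : ℕ} {v : Cell} {S : Set Cell} {P : Cell → ZMod n} {p : Cell} {d : Dir}
    (h₁ : IsHighway n isL N₁ v S P p d) (h₂ : IsHighway n isL N₂ v S P p d) : N₁ = N₂ := by
  wlog hle : N₁ ≤ N₂ generalizing N₁ N₂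
  · exact (this h₂ h₁ (le_of_not_ge hle)).symm
  refine hle.eq_of_not_lt fun hlt ↦ ?_
  have hmem := Function.mk_mem_periodicPts (Nat.sub_pos_of_lt hlt) (h₁.isPeriodicPt_of_lt h₂ hlt)
  rwa [periodicPts_antStep_eq_empty hL hR] at hmem

/-- A finite part of the grid occupying the columns `0, 1, 2, …`, each of them listed upwards from
height `0`; the columns may have different lengths. -/
abbrev Picture (n : ℕ) : Type := List (List (ZMod n))

namespace Picture

/-- The symbol at a cell, or `none` outside the picture. -/
def symbolAt (A : Picture n) : Cell → Option (ZMod n)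
  | (.ofNat x, .ofNat y) => A[x]?.bind (·[y]?)
  | _ => none

/-- The cells covered by a picture. -/
def support (A : Picture n) : Set Cell := {q | (A.symbolAt q).isSome}

/-- A picture extended by `0` to the whole grid. -/
def toPattern (A : Picture n) (q : Cell) : ZMod n := (A.symbolAt q).getD 0

/-- The picture with `1` added to the symbol at a cell. -/
def increment (A : Picture n) : Cell → Picture n
  | (.ofNat x, .ofNat y) => A.modify x (·.modify y (· + 1))
  | _ => A

/-- The partial version of `antStep`, undefined when the ant stands outside the picture. -/
def step (isL : ZMod n → Bool) (X : Picture n × Cell × Dir) : Option (Picture n × Cell × Dir) :=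
  (symbolAt X.1 X.2.1).map fun a ↦
    let d' := if isL a then X.2.2.left else X.2.2.right
    (increment X.1 X.2.1, X.2.1 + d'.vec, d')

/-- The `t`-fold iterate of `step`. The ant may be outside the picture after the last step, which
is how it passes from one block of a larger picture to the next. -/
def run (isL : ZMod n → Bool) : ℕ → Picture n × Cell × Dir → Option (Picture n × Cell × Dir)
  | 0, X => some X
  | t + 1, X => (step isL X).bind (run isL t)

variable {A B C : Picture n} {p q : Cell} {a : ZMod n} {t : ℕ} {X Y Z : Picture n × Cell × Dir}

theorem symbolAt_eq_some_iff :
    A.symbolAt q = some a ↔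
      ∃ x y : ℕ, q = (↑x, ↑y) ∧ ∃ col, A[x]? = some col ∧ col[y]? = some a := by
  obtain ⟨x | x, y | y⟩ := q
  · simp [symbolAt, Option.bind_eq_some_iff]
  all_goals
    simp only [symbolAt, reduceCtorEq, false_iff, not_exists]
    rintro x y ⟨heq, -⟩
    simp only [Prod.mk.injEq, Int.ofNat_eq_natCast] at heq
    omega

theorem finite_support (A : Picture n) : A.support.Finite := by
  refine (Set.finite_range fun i : (x : Fin A.length) × Fin A[x].length ↦
    ((i.1, i.2) : Cell)).subset fun q hq ↦ ?_
  obtain ⟨a, ha⟩ := Option.isSome_iff_exists.1 hq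
  obtain ⟨x, y, rfl, col, hcol, hy⟩ := symbolAt_eq_some_iff.1 ha
  obtain ⟨hx, rfl⟩ := List.getElem?_eq_some_iff.1 hcol
  obtain ⟨hy, -⟩ := List.getElem?_eq_some_iff.1 hy
  exact ⟨⟨⟨x, hx⟩, ⟨y, hy⟩⟩, rfl⟩

theorem symbolAt_increment (A : Picture n) (p q : Cell) :
    (A.increment p).symbolAt q = if p = q then (A.symbolAt q).map (· + 1) else A.symbolAt q := by
  obtain ⟨x | x, y | y⟩ := p <;> obtain ⟨x' | x', y' | y'⟩ := q <;>
    simp only [symbolAt, increment, List.getElem?_modify, Option.map_none, ite_self]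
  · by_cases hx : x = x' <;> by_cases hy : y = y' <;>
      simp [hx, hy, Option.bind_map, Option.map_bind]
  all_goals simp

theorem support_increment (A : Picture n) (p : Cell) : (A.increment p).support = A.support := by
  ext q
  simp only [support, Set.mem_ofPred_eq, symbolAt_increment]
  split_ifs <;> simp

theorem toPattern_increment (hp : p ∈ A.support) :
    (A.increment p).toPattern = Function.update A.toPattern p (A.toPattern p + 1) := by
  obtain ⟨a, ha⟩ := Option.isSome_iff_exists.1 hp
  funext q
  by_cases hq : p = q
  · subst hq
    simp [toPattern, symbolAt_increment, ha]
  · simp [toPattern, symbolAt_increment, hq, Function.update_of_ne (Ne.symm hq)]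

theorem symbolAt_append (h : B.symbolAt p = some a) :
    (A ++ B ++ C).symbolAt (p + ((A.length : ℤ), 0)) = some a := by
  obtain ⟨x, y, rfl, col, hcol, hy⟩ := symbolAt_eq_some_iff.1 h
  refine symbolAt_eq_some_iff.2 ⟨A.length + x, y, by simp [add_comm], col, ?_, hy⟩
  obtain ⟨hx, -⟩ := List.getElem?_eq_some_iff.1 hcol
  rw [List.append_assoc, List.getElem?_append_right (by omega), Nat.add_sub_cancel_left,
    List.getElem?_append_left hx, hcol]

theorem increment_append (h : B.symbolAt p = some a) :
    (A ++ B ++ C).increment (p + ((A.length : ℤ), 0)) = A ++ B.increment p ++ C := by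
  obtain ⟨x, y, rfl, col, hcol, -⟩ := symbolAt_eq_some_iff.1 h
  obtain ⟨hx, -⟩ := List.getElem?_eq_some_iff.1 hcol
  have hcell : ((x, y) : Cell) + ((A.length : ℤ), 0) = (.ofNat (A.length + x), .ofNat y) := by
    simp [add_comm]
  rw [hcell]
  simp [increment, List.modify_eq_set, List.getElem?_append_left, List.getElem?_append_right,
    List.set_append_left, hx]

theorem antStep_of_step (h : step isL X = some Y) :
    antStep n isL (X.1.toPattern, X.2) = (Y.1.toPattern, Y.2) := by
  obtain ⟨a, ha, rfl⟩ := Option.map_eq_some_iff.1 h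
  have hread : X.1.toPattern X.2.1 = a := by rw [toPattern, ha, Option.getD_some]
  have hX : X.2.1 ∈ X.1.support := Option.isSome_iff_exists.2 ⟨a, ha⟩
  simp only [antStep, toPattern_increment hX, hread]

theorem run_add (s t : ℕ) : run isL (s + t) X = (run isL s X).bind (run isL t) := by
  induction s generalizing X with
  | zero => simp [run]
  | succ s ih =>
    rw [Nat.succ_add, run, run, Option.bind_assoc]
    exact congrArg _ (funext fun _ ↦ ih)

theorem run_trans {s t : ℕ} (hs : run isL s X = some Y) (ht : run isL t Y = some Z) :
    run isL (s + t) X = some Z := by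
  rw [run_add, hs, Option.bind_some, ht]

theorem iterate_antStep_of_run (h : run isL t X = some Y) :
    (antStep n isL)^[t] (X.1.toPattern, X.2) = (Y.1.toPattern, Y.2) := by
  induction t generalizing X with
  | zero => obtain rfl := Option.some.inj h; rfl
  | succ t ih =>
    obtain ⟨Z, hXZ, hZY⟩ := Option.bind_eq_some_iff.1 h
    rw [Function.iterate_succ_apply, antStep_of_step hXZ, ih hZY]

theorem support_of_step (h : step isL X = some Y) : Y.1.support = X.1.support := by
  obtain ⟨a, -, rfl⟩ := Option.map_eq_some_iff.1 h
  exact support_increment _ _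

theorem mem_support_of_step (h : step isL X = some Y) : X.2.1 ∈ X.1.support := by
  obtain ⟨a, ha, -⟩ := Option.map_eq_some_iff.1 h
  exact Option.isSome_iff_exists.2 ⟨a, ha⟩

theorem support_of_run (h : run isL t X = some Y) : Y.1.support = X.1.support := by
  induction t generalizing X with
  | zero => obtain rfl := Option.some.inj h; rfl
  | succ t ih =>
    obtain ⟨Z, hXZ, hZY⟩ := Option.bind_eq_some_iff.1 h
    rw [ih hZY, support_of_step hXZ]

theorem iterate_antStep_mem_support_of_run (h : run isL t X = some Y) {s : ℕ} (hs : s < t) :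
    ((antStep n isL)^[s] (X.1.toPattern, X.2)).2.1 ∈ X.1.support := by
  obtain ⟨r, rfl⟩ := Nat.exists_eq_add_of_lt hs
  rw [add_assoc, run_add] at h
  obtain ⟨Z, hXZ, hZY⟩ := Option.bind_eq_some_iff.1 h
  obtain ⟨W, hZW, -⟩ := Option.bind_eq_some_iff.1 hZY
  rw [iterate_antStep_of_run hXZ, ← support_of_run hXZ]
  exact mem_support_of_step hZW

theorem step_append (h : step isL X = some Y) :
    step isL (A ++ X.1 ++ C, X.2.1 + ((A.length : ℤ), 0), X.2.2) =
      some (A ++ Y.1 ++ C, Y.2.1 + ((A.length : ℤ), 0), Y.2.2) := by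
  obtain ⟨a, ha, rfl⟩ := Option.map_eq_some_iff.1 h
  simp only [step, symbolAt_append ha, increment_append ha, Option.map_some, add_right_comm]

theorem run_append (h : run isL t X = some Y) :
    run isL t (A ++ X.1 ++ C, X.2.1 + ((A.length : ℤ), 0), X.2.2) =
      some (A ++ Y.1 ++ C, Y.2.1 + ((A.length : ℤ), 0), Y.2.2) := by
  induction t generalizing X with
  | zero => obtain rfl := Option.some.inj h; rfl
  | succ t ih =>
    obtain ⟨Z, hXZ, hZY⟩ := Option.bind_eq_some_iff.1 h
    rw [run, step_append hXZ, Option.bind_some, ih hZY]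

theorem run_append_right (h : run isL t X = some Y) (C : Picture n) :
    run isL t (X.1 ++ C, X.2) = some (Y.1 ++ C, Y.2) := by
  simpa [Prod.mk_zero_zero] using run_append (A := []) (C := C) h

theorem run_append_left (h : run isL t X = some Y) (A : Picture n) :
    run isL t (A ++ X.1, X.2.1 + ((A.length : ℤ), 0), X.2.2) =
      some (A ++ Y.1, Y.2.1 + ((A.length : ℤ), 0), Y.2.2) := by
  simpa using run_append (A := A) (C := []) h

/-- `j` copies of a picture side by side. -/
def tile (B : Picture n) (j : ℕ) : Picture n := (List.replicate j B).flatten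

theorem tile_succ (B : Picture n) (j : ℕ) : B.tile (j + 1) = B.tile j ++ B := by
  simp [tile, List.replicate_succ']

theorem tile_succ' (B : Picture n) (j : ℕ) : B.tile (j + 1) = B ++ B.tile j := by
  simp [tile, List.replicate_succ]

theorem run_tile_right {B B' G : Picture n} {p : Cell} {d : Dir}
    (h : run isL t (G ++ B, p, d) = some (B' ++ G, p + ((B'.length : ℤ), 0), d)) (j : ℕ) :
    run isL (t * j) (G ++ B.tile j, p, d) =
      some (B'.tile j ++ G, p + (((B'.tile j).length : ℤ), 0), d) := by
  induction j with
  | zero => simp [run, tile]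
  | succ j ih =>
    have hinit := run_append_right ih B
    have hlast := run_append_left h (B'.tile j)
    simp only [List.append_assoc] at hinit hlast
    rw [Nat.mul_succ, tile_succ, tile_succ, run_trans hinit hlast]
    simp [add_assoc, add_comm]

theorem run_tile_left {B B' : Picture n} {p : Cell} {d : Dir}
    (h : run isL t (B, p + ((B.length : ℤ), 0), d) = some (B', p, d)) (j : ℕ) :
    run isL (t * j) (B.tile j, p + (((B.tile j).length : ℤ), 0), d) = some (B'.tile j, p, d) := by
  induction j with
  | zero => simp [run, tile]
  | succ j ih =>
    have hinit := run_append_left h (B.tile j)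
    have hlast := run_append_right ih B'
    have htrans := run_trans hinit hlast
    rw [Nat.mul_succ, tile_succ, tile_succ, add_comm (t * j), ← htrans]
    simp only [List.length_append, Nat.cast_add, add_assoc, Prod.mk_add_mk, add_zero,
      add_comm (B.length : ℤ)]

theorem run_excursion {B B' B'' G R R' : Picture n} {p p' : Cell} {d d' : Dir} {t₁ t₂ t₃ : ℕ}
    (hout : run isL t₁ (G ++ B, p, d) = some (B' ++ G, p + ((B'.length : ℤ), 0), d))
    (hturn : run isL t₂ (G ++ R, p, d) = some (R', p', d'))
    (hback : run isL t₃ (B', p' + ((B'.length : ℤ), 0), d') = some (B'', p', d')) (j : ℕ) :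
    run isL (t₁ * j + t₂ + t₃ * j) (G ++ B.tile j ++ R, p, d) =
      some (B''.tile j ++ R', p', d') := by
  have hout' := run_append_right (run_tile_right hout j) R
  have hturn' := run_append_left hturn (B'.tile j)
  have hback' := run_append_right (run_tile_left hback j) R'
  simp only [List.append_assoc] at hout' hturn' ⊢
  exact run_trans (run_trans hout' hturn') hback'

/-- Column by column, `L` is the lower end of `E` moved up by `b`, with zeros filled in below.
Moving `L` down by `b` therefore only drops zeros and lands inside `E`, which is the recurrence
condition of a highway. -/
abbrev ReappearsBelow (b : ℕ) (L E : Picture n) : Prop :=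
  List.Forall₂ (fun col col' ↦ col <+: List.replicate b 0 ++ col') L E

theorem ReappearsBelow.tile {b : ℕ} {L E : Picture n} (h : ReappearsBelow b L E) (j : ℕ) :
    ReappearsBelow b (Picture.tile L j) (Picture.tile E j) := by
  induction j with
  | zero => exact .nil
  | succ j ih => rw [tile_succ, tile_succ]; exact List.rel_append ih h

theorem symbolAt_reappears {Z L E₁ E₂ : Picture n} {b : ℕ} {s : ZMod n}
    (hZ : ∀ col ∈ Z, ∀ s ∈ col, s = 0) (hL : ReappearsBelow b L E₁)
    (hq : symbolAt (Z ++ L) q = some s) :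
    symbolAt (E₁ ++ E₂) (q + (-(Z.length : ℤ), -(b : ℤ))) = some s ∨
      s = 0 ∧ ∀ A : Picture n, A.symbolAt (q + (-(Z.length : ℤ), -(b : ℤ))) = none := by
  obtain ⟨x, y, rfl, col, hcol, hy⟩ := symbolAt_eq_some_iff.1 hq
  have hnone : x < Z.length ∨ y < b → ∀ A : Picture n,
      A.symbolAt (((x, y) : Cell) + (-(Z.length : ℤ), -(b : ℤ))) = none := by
    refine fun hlt A ↦ Option.eq_none_iff_forall_ne_some.2 fun a ha ↦ ?_
    obtain ⟨x', y', heq, -⟩ := symbolAt_eq_some_iff.1 ha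
    simp only [Prod.mk_add_mk, Prod.mk.injEq] at heq
    omega
  rcases lt_or_ge x Z.length with hx | hx
  · rw [List.getElem?_append_left hx] at hcol
    exact .inr ⟨hZ col (List.mem_of_getElem? hcol) s (List.mem_of_getElem? hy), hnone (.inl hx)⟩
  rw [List.getElem?_append_right hx] at hcol
  obtain ⟨hxL, rfl⟩ := List.getElem?_eq_some_iff.1 hcol
  have hxE : x - Z.length < E₁.length := hL.length_eq ▸ hxL
  obtain ⟨r, hr⟩ := hL.get hxL hxE
  simp only [List.get_eq_getElem] at hr
  have hcol' : (List.replicate b 0 ++ E₁[x - Z.length])[y]? = some s := by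
    rw [← hr, List.getElem?_append_left (List.getElem?_eq_some_iff.1 hy).1, hy]
  rcases lt_or_ge y b with hyb | hyb
  · rw [List.getElem?_append_left (by simpa using hyb), List.getElem?_replicate_of_lt hyb] at hcol'
    exact .inr ⟨(Option.some.inj hcol').symm, hnone (.inr hyb)⟩
  · rw [List.getElem?_append_right (by simpa using hyb), List.length_replicate] at hcol'
    refine .inl (symbolAt_eq_some_iff.2 ⟨x - Z.length, y - b, ?_, E₁[x - Z.length], ?_, hcol'⟩)
    · simp [Nat.cast_sub hx, Nat.cast_sub hyb, sub_eq_add_neg]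
    · rw [List.getElem?_append_left hxE, List.getElem?_eq_getElem hxE]

theorem isHighway_of_run {N b : ℕ} {d : Dir} {Z L E₁ E₂ : Picture n} (hN : 0 < N)
    (hrun : run isL N (Z ++ L, p, d) =
      some (E₁ ++ E₂, p + (-(Z.length : ℤ), -(b : ℤ)), d))
    (hZ : ∀ col ∈ Z, ∀ s ∈ col, s = 0) (hL : ReappearsBelow b L E₁) :
    IsHighway n isL N (-(Z.length : ℤ), -(b : ℤ)) (support (Z ++ L)) (toPattern (Z ++ L)) p d := by
  have hstay := fun t (ht : t < N) ↦ iterate_antStep_mem_support_of_run hrun ht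
  have hsupp : support (E₁ ++ E₂) = support (Z ++ L) := support_of_run hrun
  have hend := iterate_antStep_of_run hrun
  refine ⟨finite_support _, hstay 0 hN, fun q hq ↦ ?_, hstay, by rw [hend], by rw [hend],
    fun q hq ↦ ?_⟩
  · rw [toPattern, Option.not_isSome_iff_eq_none.1 hq, Option.getD_none]
  · obtain ⟨s, hs⟩ := Option.isSome_iff_exists.1 hq
    rw [hend, ← hsupp]
    simp only [toPattern, support, Set.mem_ofPred_eq, hs]
    rcases symbolAt_reappears (E₂ := E₂) hZ hL hs with hreappear | ⟨rfl, hnone⟩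
    · simp [hreappear]
    · simp [hnone]

end Picture

end

namespace LLRLRL

open Picture

/-- The two westernmost columns, which the ant has not visited yet. -/
def blank : Picture 6 := List.replicate 2 (List.replicate 9 0)

/-- The part of the highway between the blank columns and the wake, the same for all periods. -/
def core : Picture 6 :=
  [[0, 0, 0, 0, 0, 0, 2, 3, 0], [0, 0, 0, 0, 0, 0, 3, 0, 4], [0, 0, 0, 0, 2, 2, 3, 2],
    [0, 0, 0, 0, 2, 2, 3, 0], [0, 0, 2, 2, 2, 3, 1], [0, 0, 2, 5, 4, 0]]

/-- The eight westernmost columns, at the three times the ant has finished working on them. -/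
def head : Fin 3 → Picture 6
  | 0 => [[0, 0, 0, 0, 0, 0, 0, 0, 0], [0, 0, 0, 0, 0, 2, 2, 2, 2], [0, 0, 0, 0, 0, 2, 0, 0, 2],
      [0, 0, 0, 2, 2, 1, 5, 1, 4], [0, 0, 0, 2, 5, 3, 3, 2], [0, 2, 2, 1, 3, 2, 3, 0],
      [0, 2, 5, 3, 2, 3, 1], [0, 2, 4, 5, 4, 0]]
  | 1 => [[0, 0, 0, 0, 2, 2, 0, 0, 0], [0, 0, 0, 0, 2, 5, 4, 3, 2], [0, 0, 2, 2, 2, 1, 3, 1, 3],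
      [0, 0, 2, 0, 0, 5, 2, 3, 5], [2, 2, 1, 5, 2, 5, 1, 5], [2, 5, 3, 3, 1, 0, 0, 1],
      [1, 3, 5, 4, 5, 0, 2], [1, 3, 4, 5, 5, 1]]
  | 2 => [[0, 0, 0, 0, 2, 3, 0, 0, 0], [0, 0, 0, 0, 3, 0, 4, 3, 2], [0, 0, 2, 2, 3, 2, 3, 1, 3],
      [0, 0, 2, 2, 3, 0, 2, 3, 5], [2, 2, 2, 3, 1, 1, 1, 5], [2, 5, 4, 0, 5, 2, 0, 1],
      [1, 3, 5, 0, 1, 0, 2], [1, 3, 5, 0, 5, 1]]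

/-- One tile of the wake, at the start and after each of the four crossings by the ant. -/
def wake : Fin 5 → Picture 6
  | 0 => .tile [[0, 0, 1, 3, 5]] 2
  | 1 => .tile [[0, 2, 4, 4, 5]] 2
  | 2 => .tile [[0, 2, 4, 5, 0]] 2
  | 3 => .tile [[1, 3, 4, 5, 0]] 2
  | 4 => .tile [[1, 3, 5, 0, 0]] 2

/-- The two columns that the ant carries along on its first way out. -/
def glider : Picture 6 := [[0, 2, 4, 4, 5], [0, 0, 2, 4, 5]]

/-- The east end of the wake, at the start and after each of the two excursions; the first excursion
absorbs the glider into it. -/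
def tip : Fin 3 → Picture 6
  | 0 => [[0, 0, 2, 4, 5], [0, 0, 3, 5]]
  | 1 => [[0, 2, 4, 5, 0], [0, 1, 3, 5, 0], [0, 1, 3, 5, 0], [0, 0, 4, 0]]
  | 2 => [[2, 4, 5, 0, 0], [3, 5, 5, 0, 0], [3, 1, 0, 5, 0], [2, 3, 5, 0]]

/-- The picture of the highway of period `220 + 24 * n`, without the blank columns. -/
def strip (n : ℕ) : Picture 6 := core ++ (wake 0).tile n ++ tip 0

/-- Without wake the tip takes part already in the opening moves, so this period is not composed
like those of `run_period_succ`. -/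
theorem run_period_zero :
    run isLLRLRL 220 (blank ++ strip 0, (2, 8), .N) =
      some ((head 2).take 6 ++ [[2, 4, 5, 0, 1, 0, 2], [3, 5, 5, 0, 5, 1]] ++
        [[3, 1, 0, 5, 0], [2, 3, 5, 0]], (0, 6), .N) := by
  decide +kernel

theorem run_start : run isLLRLRL 57 (blank ++ core ++ wake 0, (2, 8), .N) =
    some (head 0 ++ glider, (9, 2), .E) := by
  decide +kernel

theorem run_first_excursion (j : ℕ) :
    run isLLRLRL (12 * j + 12 + 4 * j) (glider ++ (wake 0).tile j ++ tip 0, (1, 2), .E) =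
      some ((wake 2).tile j ++ tip 1, (-1, 4), .W) :=
  run_excursion (B' := wake 1) (by decide +kernel) (by decide +kernel) (by decide +kernel) j

theorem run_between_excursions :
    run isLLRLRL 102 (head 0, (7, 4), .W) = some (head 1, (8, 1), .E) := by
  decide +kernel

theorem run_second_excursion (j : ℕ) :
    run isLLRLRL (4 * j + 34 + 4 * j) ((wake 2).tile j ++ tip 1, (0, 1), .E) =
      some ((wake 4).tile j ++ tip 2, (-1, 2), .W) :=
  run_excursion (G := []) (B' := wake 3) (by decide +kernel) (by decide +kernel)
    (by decide +kernel) j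

theorem run_finish : run isLLRLRL 39 (head 1, (7, 2), .W) = some (head 2, (0, 6), .N) := by
  decide +kernel

theorem run_period_succ (j : ℕ) :
    run isLLRLRL (220 + 24 * (j + 1)) (blank ++ strip (j + 1), (2, 8), .N) =
      some (head 2 ++ (wake 4).tile j ++ (tip 2).take 2 ++ (tip 2).drop 2, (0, 6), .N) := by
  have h₁ := run_append_right run_start ((wake 0).tile j ++ tip 0)
  have h₂ := run_append_left (run_first_excursion j) (head 0)
  have h₃ := run_append_right run_between_excursions ((wake 2).tile j ++ tip 1)
  have h₄ := run_append_left (run_second_excursion j) (head 1)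
  have h₅ := run_append_right run_finish ((wake 4).tile j ++ tip 2)
  have hhead : ∀ i, (head i).length = 8 := by decide
  have htime : 220 + 24 * (j + 1) =
      57 + (12 * j + 12 + 4 * j) + 102 + (4 * j + 34 + 4 * j) + 39 := by ring
  simp only [List.append_assoc, hhead, Prod.mk_add_mk] at h₁ h₂ h₃ h₄ h₅
  rw [htime, strip, tile_succ']
  simpa using run_trans (run_trans (run_trans (run_trans h₁ h₂) h₃) h₄) h₅

theorem strip_succ_reappearsBelow (j : ℕ) :
    ReappearsBelow 2 (strip (j + 1)) (head 2 ++ (wake 4).tile j ++ (tip 2).take 2) := by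
  have hwest : ReappearsBelow 2 (core ++ wake 0) (head 2) := by decide
  have hwake : ReappearsBelow 2 (wake 0) (wake 4) := by decide
  have heast : ReappearsBelow 2 (tip 0) ((tip 2).take 2) := by decide
  rw [strip, tile_succ', ← List.append_assoc]
  exact List.rel_append (List.rel_append hwest (hwake.tile j)) heast

theorem exists_isHighway (n : ℕ) : ∃ (S : Set Cell) (P : Cell → ZMod 6) (p : Cell) (d : Dir),
    IsHighway 6 isLLRLRL (220 + 24 * n) (-2, -2) S P p d := by
  have hblank : ∀ col ∈ blank, ∀ s ∈ col, s = 0 := by decide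
  cases n with
  | zero => exact ⟨_, _, _, _, isHighway_of_run (b := 2) (by omega) run_period_zero hblank
      (by decide)⟩
  | succ j => exact ⟨_, _, _, _, isHighway_of_run (b := 2) (by omega) (run_period_succ j) hblank
      (strip_succ_reappearsBelow j)⟩

end LLRLRL

/-- The ant `LLRLRL` has infinitely many highways: the set of
periods `N` for which it admits a highway of period `N` and drift `(−2,−2)` is
infinite (it contains `220 + 24n` for every `n`), and a fixed highway configuration
`(S, P, p, d)` can be a highway of drift `(−2,−2)` for at most one period `N`
(since `T_{LLRLRL}` has no periodic points), so these highways are pairwise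
distinct. -/
theorem llrlrl_infinitely_many_highways :
    {N : ℕ | ∃ (S : Set Cell) (P : Cell → ZMod 6) (p : Cell) (d : Dir),
        IsHighway 6 isLLRLRL N ((-2, -2) : Cell) S P p d}.Infinite ∧
    (∀ n : ℕ, 220 + 24 * n ∈
      {N : ℕ | ∃ (S : Set Cell) (P : Cell → ZMod 6) (p : Cell) (d : Dir),
        IsHighway 6 isLLRLRL N ((-2, -2) : Cell) S P p d}) ∧
    (∀ (N₁ N₂ : ℕ) (S : Set Cell) (P : Cell → ZMod 6) (p : Cell) (d : Dir),
      IsHighway 6 isLLRLRL N₁ ((-2, -2) : Cell) S P p d →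
      IsHighway 6 isLLRLRL N₂ ((-2, -2) : Cell) S P p d → N₁ = N₂) := by
  refine ⟨?_, LLRLRL.exists_isHighway, fun N₁ N₂ S P p d h₁ h₂ ↦
    h₁.period_unique ⟨0, by decide⟩ ⟨2, by decide⟩ h₂⟩
  exact Set.infinite_of_injective_forall_mem (f := fun n ↦ 220 + 24 * n)
    (fun _ _ h ↦ by simpa using h) LLRLRL.exists_isHighway
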